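/- Let N be a positive integer, R ≤ N, let κ' = diag(κ'_1,…,κ'_R) and κ'' = diag(κ''_{R+1},…,κ''_N) be diagonal real matrices with strictly positive entries, and set κ = diag(κ',κ''). Let C and D be real N×N matrices, partitioned into blocks C = [[C₁₁,C₁₂],[C₂₁,C₂₂]], D = [[D₁₁,D₁₂],[D₂₁,D₂₂]] with C₁₁ of size R×R. Assume: (i) M := C₁₁ is invertible and C₂₂ = C₂₁M⁻¹C₁₂ (so that C has rank R); (ii) setting Q₀ := C₂₁M⁻¹, for every i ≤ R and j > R, either (Q₀)_{ji} = 0 or κ''_j < κ'_i; (iii) DᵀC = CᵀD; (iv) σ(r) := κ^{−1/2}(e^{κr}C + e^{−κr}D) is invertible for at least one r ≥ 0. Then there exists r₀ ≥ 0 such that σ(r) is invertible for all r ≥ r₀ and U(r) = σ'(r)σ(r)⁻¹ converges, as r → ∞, to the diagonal matrix with entries +κ'_i (i = 1,…,R) and −κ''_j (j = R+1,…,N). -/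

import Mathlib

open Matrix Filter

/-!
Replacing `(C, D)` by `(CW, DW)` multiplies `σ` on the right by `W` and so leaves `σ'σ⁻¹` unchanged.
Column operations bring the pair to `C = [[1, 0], [Q, 0]]`, `D = [[A, -Qᵀ], [E, 1]]`: the symmetry
of `DᵀC` forces the block `-Qᵀ`, and since `C` and `D` have no common kernel the lower right block
of `D` is invertible. Multiplying on the right by `diag(e^{-κ'r}, e^{κ''r})` as well, the growing
part `e^{κr}C` tends to `diag(1, 0)` and the decaying part `e^{-κr}D` to `diag(0, 1)`; the condition
on `Q` is what makes the entries `e^{(κ''_j - κ'_i)r} Q_{ji}` vanish in the limit. Differentiation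
multiplies row `i` by `κ_i` and flips the sign of the decaying part, whence the signs of the limit.
-/

open scoped Topology

section Convergence

variable {α n 𝕜 : Type*} [Fintype n] [DecidableEq n] [Field 𝕜] [TopologicalSpace 𝕜] {l : Filter α}

lemma eventually_isUnit_of_tendsto [IsTopologicalRing 𝕜] [T1Space 𝕜] {X : α → Matrix n n 𝕜}
    {M : Matrix n n 𝕜} (hX : Tendsto X l (𝓝 M)) (hM : IsUnit M) : ∀ᶠ a in l, IsUnit (X a) := by
  have hdet : Tendsto (fun a => (X a).det) l (𝓝 M.det) :=
    (continuous_id.matrix_det.tendsto M).comp hX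
  filter_upwards [hdet.eventually_ne ((isUnit_iff_isUnit_det M).1 hM).ne_zero] with a ha
  exact (isUnit_iff_isUnit_det _).2 ha.isUnit

variable {X Y V : α → Matrix n n 𝕜} {M L : Matrix n n 𝕜}

lemma eventually_isUnit_of_tendsto_mul [IsTopologicalRing 𝕜] [T1Space 𝕜]
    (hY : Tendsto (fun a => Y a * V a) l (𝓝 M)) (hM : IsUnit M) : ∀ᶠ a in l, IsUnit (Y a) :=
  (eventually_isUnit_of_tendsto hY hM).mono fun _ => isUnit_of_mul_isUnit_left

lemma tendsto_mul_inv_of_tendsto_mul [IsTopologicalDivisionRing 𝕜] [T1Space 𝕜]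
    (hX : Tendsto (fun a => X a * V a) l (𝓝 (L * M)))
    (hY : Tendsto (fun a => Y a * V a) l (𝓝 M)) (hM : IsUnit M) :
    Tendsto (fun a => X a * (Y a)⁻¹) l (𝓝 L) := by
  have hdet : IsUnit M.det := (isUnit_iff_isUnit_det M).1 hM
  have hinv : ContinuousAt Inv.inv M := by
    refine continuousAt_matrix_inv M ?_
    rw [Ring.inverse_eq_inv']
    exact continuousAt_inv₀ hdet.ne_zero
  have hlim : Tendsto (fun a => X a * V a * (Y a * V a)⁻¹) l (𝓝 L) := by
    simpa only [mul_nonsing_inv_cancel_right _ _ hdet, Function.comp_apply] using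
      hX.mul (hinv.tendsto.comp hY)
  refine hlim.congr' ?_
  filter_upwards [eventually_isUnit_of_tendsto hY hM] with a ha
  have hV : IsUnit (V a).det := (isUnit_iff_isUnit_det _).1 (isUnit_of_mul_isUnit_right ha)
  rw [Matrix.mul_inv_rev, ← Matrix.mul_assoc, mul_nonsing_inv_cancel_right _ _ hV]

end Convergence

section NormalForm

variable {m p 𝕜 : Type*} [Fintype m] [Fintype p] [DecidableEq m]

lemma fromBlocks_mul_column_reduction [DecidableEq p] [CommRing 𝕜] {M : Matrix m m 𝕜}
    (hM : IsUnit M) (B : Matrix m p 𝕜) (Z : Matrix p m 𝕜) :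
    fromBlocks M B Z (Z * M⁻¹ * B) * fromBlocks M⁻¹ (-(M⁻¹ * B)) 0 1 =
      fromBlocks 1 0 (Z * M⁻¹) 0 := by
  have hdet : IsUnit M.det := (isUnit_iff_isUnit_det M).1 hM
  simp [fromBlocks_multiply, ← Matrix.mul_assoc, mul_nonsing_inv M hdet]

lemma toBlocks₁₂_eq_neg_transpose_mul_toBlocks₂₂ [CommRing 𝕜] {Q : Matrix p m 𝕜}
    {D : Matrix (m ⊕ p) (m ⊕ p) 𝕜}
    (hsym : Dᵀ * fromBlocks 1 0 Q 0 = (fromBlocks 1 0 Q 0)ᵀ * D) :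
    D.toBlocks₁₂ = -(Qᵀ * D.toBlocks₂₂) := by
  rw [← fromBlocks_toBlocks D] at hsym
  have h₁₂ := congrArg toBlocks₁₂ hsym
  simp only [fromBlocks_transpose, fromBlocks_multiply, toBlocks_fromBlocks₁₂, transpose_one,
    Matrix.mul_zero, add_zero, Matrix.one_mul] at h₁₂
  exact eq_neg_of_add_eq_zero_left h₁₂.symm

variable [Field 𝕜]

lemma isUnit_toBlocks₂₂_of_ker_trivial [DecidableEq p] {Q : Matrix p m 𝕜}
    {D : Matrix (m ⊕ p) (m ⊕ p) 𝕜} (hD : D.toBlocks₁₂ = -(Qᵀ * D.toBlocks₂₂))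
    (hker : ∀ v, (fromBlocks 1 0 Q 0 : Matrix (m ⊕ p) (m ⊕ p) 𝕜) *ᵥ v = 0 →
      D *ᵥ v = 0 → v = 0) :
    IsUnit D.toBlocks₂₂ := by
  refine mulVec_injective_iff_isUnit.1 ((injective_iff_map_eq_zero D.toBlocks₂₂.mulVecLin).2 ?_)
  intro v (hv : D.toBlocks₂₂ *ᵥ v = 0)
  have hv₁₂ : D.toBlocks₁₂ *ᵥ v = 0 := by
    rw [hD, neg_mulVec, ← mulVec_mulVec, hv, mulVec_zero, neg_zero]
  have h0 : Sum.elim (0 : m → 𝕜) v = 0 := by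
    refine hker _ (by simp [fromBlocks_mulVec]) ?_
    rw [← fromBlocks_toBlocks D, fromBlocks_mulVec]
    simp [hv, hv₁₂]
  exact funext fun j => congrFun h0 (Sum.inr j)

lemma exists_mul_eq_normal_form [DecidableEq p] {C D : Matrix (m ⊕ p) (m ⊕ p) 𝕜}
    (hM : IsUnit C.toBlocks₁₁)
    (hrank : C.toBlocks₂₂ = C.toBlocks₂₁ * (C.toBlocks₁₁)⁻¹ * C.toBlocks₁₂)
    (hsym : Dᵀ * C = Cᵀ * D) (hker : ∀ v, C *ᵥ v = 0 → D *ᵥ v = 0 → v = 0) :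
    ∃ (W : Matrix (m ⊕ p) (m ⊕ p) 𝕜) (A : Matrix m m 𝕜) (E : Matrix p m 𝕜),
      C * W = fromBlocks 1 0 (C.toBlocks₂₁ * (C.toBlocks₁₁)⁻¹) 0 ∧
      D * W = fromBlocks A (-(C.toBlocks₂₁ * (C.toBlocks₁₁)⁻¹)ᵀ) E 1 := by
  set Q := C.toBlocks₂₁ * (C.toBlocks₁₁)⁻¹
  let W : Matrix (m ⊕ p) (m ⊕ p) 𝕜 :=
    fromBlocks (C.toBlocks₁₁)⁻¹ (-((C.toBlocks₁₁)⁻¹ * C.toBlocks₁₂)) 0 1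
  have hW : IsUnit W := isUnit_fromBlocks_zero₂₁.2 ⟨isUnit_nonsing_inv_iff.2 hM, isUnit_one⟩
  have hCW : C * W = fromBlocks 1 0 Q 0 := by
    rw [← fromBlocks_mul_column_reduction hM C.toBlocks₁₂ C.toBlocks₂₁, ← hrank,
      fromBlocks_toBlocks]
  have hsymW : (D * W)ᵀ * (C * W) = (C * W)ᵀ * (D * W) := by
    calc (D * W)ᵀ * (C * W) = Wᵀ * (Dᵀ * C) * W := by
          simp only [transpose_mul, Matrix.mul_assoc]
      _ = (C * W)ᵀ * (D * W) := by
          rw [hsym]; simp only [transpose_mul, Matrix.mul_assoc]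
  have hkerW : ∀ v, (C * W) *ᵥ v = 0 → (D * W) *ᵥ v = 0 → v = 0 := by
    intro v hCv hDv
    rw [← mulVec_mulVec] at hCv hDv
    exact mulVec_injective_iff_isUnit.2 hW ((hker _ hCv hDv).trans (mulVec_zero W).symm)
  rw [hCW] at hsymW hkerW
  have hB := toBlocks₁₂_eq_neg_transpose_mul_toBlocks₂₂ hsymW
  have hF := (isUnit_iff_isUnit_det _).1 (isUnit_toBlocks₂₂_of_ker_trivial hB hkerW)
  refine ⟨W * fromBlocks 1 0 0 ((D * W).toBlocks₂₂)⁻¹, (D * W).toBlocks₁₁, (D * W).toBlocks₂₁,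
    ?_, ?_⟩
  · rw [← Matrix.mul_assoc, hCW]
    simp [fromBlocks_multiply]
  · rw [← Matrix.mul_assoc]
    conv_lhs => rw [← fromBlocks_toBlocks (D * W), hB]
    simp [fromBlocks_multiply, mul_nonsing_inv_cancel_right _ _ hF, mul_nonsing_inv _ hF]

end NormalForm

section ExponentialScaling

lemma tendsto_diagonal_exp_mul_mul_diagonal_exp {m n : Type*} [Fintype m] [Fintype n]
    [DecidableEq m] [DecidableEq n] {a : m → ℝ} {b : n → ℝ} {M : Matrix m n ℝ}
    (h : ∀ i j, M i j ≠ 0 → a i + b j ≤ 0) :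
    Tendsto
      (fun r : ℝ => diagonal (fun i => Real.exp (a i * r)) * M *
        diagonal (fun j => Real.exp (b j * r)))
      atTop (𝓝 (of fun i j => if a i + b j = 0 then M i j else 0)) := by
  refine tendsto_pi_nhds.2 fun i => tendsto_pi_nhds.2 fun j => ?_
  have hentry : ∀ r : ℝ, (diagonal (fun i => Real.exp (a i * r)) * M *
      diagonal (fun j => Real.exp (b j * r))) i j = M i j * Real.exp ((a i + b j) * r) := by
    intro r
    rw [mul_diagonal, diagonal_mul, add_mul, Real.exp_add]
    ring
  simp only [hentry, of_apply]
  by_cases hM : M i j = 0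
  · simp [hM]
  rcases (h i j hM).eq_or_lt with h0 | hneg
  · simp [h0]
  · have hexp : Tendsto (fun r : ℝ => Real.exp ((a i + b j) * r)) atTop (𝓝 0) :=
      Real.tendsto_exp_atBot.comp (tendsto_id.const_mul_atTop_of_neg hneg)
    simpa [hneg.ne] using hexp.const_mul (M i j)

variable {m p : Type*} [Fintype m] [Fintype p] [DecidableEq m] [DecidableEq p]
  {κ' : m → ℝ} {κ'' : p → ℝ} {Q : Matrix p m ℝ}

lemma tendsto_growing_part (hQ : ∀ i j, Q j i = 0 ∨ κ'' j < κ' i) :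
    Tendsto
      (fun r : ℝ => diagonal (fun i => Real.exp (Sum.elim κ' κ'' i * r)) * fromBlocks 1 0 Q 0 *
        diagonal (fun i => Real.exp (Sum.elim (-κ') κ'' i * r)))
      atTop (𝓝 (fromBlocks 1 0 0 0)) := by
  convert tendsto_diagonal_exp_mul_mul_diagonal_exp _ using 2
  · ext (i | j) (i' | j')
    · rcases eq_or_ne i i' with rfl | hne <;> simp [*]
    · simp only [fromBlocks_apply₁₂, of_apply, Matrix.zero_apply, ite_self]
    · rcases hQ i' j with h | h
      · simp [h]
      · simp [← sub_eq_add_neg, (sub_neg.2 h).ne]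
    · simp only [fromBlocks_apply₂₂, of_apply, Matrix.zero_apply, ite_self]
  · rintro (i | j) (i' | j') hne
    · rcases eq_or_ne i i' with rfl | hne' <;> simp_all
    · simp at hne
    · simpa using ((hQ i' j).resolve_left hne).le
    · simp at hne

lemma tendsto_decaying_part (hκ' : ∀ i, 0 < κ' i) (hκ : ∀ i j, 0 < κ' i + κ'' j)
    (hQ : ∀ i j, Q j i = 0 ∨ κ'' j < κ' i) (A : Matrix m m ℝ) (E : Matrix p m ℝ) :
    Tendsto
      (fun r : ℝ => diagonal (fun i => Real.exp (-Sum.elim κ' κ'' i * r)) *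
        fromBlocks A (-Qᵀ) E 1 * diagonal (fun i => Real.exp (Sum.elim (-κ') κ'' i * r)))
      atTop (𝓝 (fromBlocks 0 0 0 1)) := by
  have hA : ∀ i i', -κ' i + -κ' i' < 0 := fun i i' => by linarith [hκ' i, hκ' i']
  have hE : ∀ i j, -κ'' j + -κ' i < 0 := fun i j => by linarith [hκ i j]
  convert tendsto_diagonal_exp_mul_mul_diagonal_exp _ using 2
  · ext (i | j) (i' | j')
    · simp [(hA i i').ne]
    · rcases hQ i j' with h | h
      · simp [h]
      · simp [(by linarith : -κ' i + κ'' j' < 0).ne]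
    · simp [(hE i' j).ne]
    · rcases eq_or_ne j j' with rfl | hne <;> simp [*]
  · rintro (i | j) (i' | j') hne
    · exact (hA i i').le
    · simpa using ((hQ i j').resolve_left (by simpa using hne)).le
    · exact (hE i' j).le
    · rcases eq_or_ne j j' with rfl | hne' <;> simp_all

end ExponentialScaling

section Superpotential

variable {n k : Type*} [Fintype n] [DecidableEq n]

/-- The factorization solution `σ(r) = w(e^{κr}C + e^{-κr}D)`, where the vectors `w` and `κ` stand
for diagonal matrices; the usual normalization is `w = κ^{-1/2}`. Keeping `w` free makes
differentiation the operation `(w, D) ↦ (wκ, -D)`. -/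
noncomputable def factorizationSolution (w κ : n → ℝ) (C D : Matrix n k ℝ) (r : ℝ) :
    Matrix n k ℝ :=
  diagonal w * (diagonal (fun i => Real.exp (κ i * r)) * C +
    diagonal (fun i => Real.exp (-(κ i) * r)) * D)

/-- The superpotential `U(r) = σ'(r)σ(r)⁻¹`, with the derivative taken entrywise. As `⁻¹` is zero
on singular matrices, `U(r) = 0` where `σ(r)` is not invertible. -/
noncomputable def superpotential (σ : ℝ → Matrix n n ℝ) (r : ℝ) : Matrix n n ℝ :=
  (of fun i j => deriv (fun s => σ s i j) r) * (σ r)⁻¹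

lemma factorizationSolution_apply (w κ : n → ℝ) (C D : Matrix n k ℝ) (r : ℝ) (i : n) (j : k) :
    factorizationSolution w κ C D r i j =
      w i * (Real.exp (κ i * r) * C i j + Real.exp (-κ i * r) * D i j) := by
  simp only [factorizationSolution, diagonal_mul, Matrix.add_apply]

lemma eq_zero_of_isUnit_factorizationSolution {w κ : n → ℝ} {C D : Matrix n n ℝ} {r : ℝ}
    (hσ : IsUnit (factorizationSolution w κ C D r)) {v : n → ℝ} (hC : C *ᵥ v = 0)
    (hD : D *ᵥ v = 0) : v = 0 := by
  refine mulVec_injective_iff_isUnit.2 hσ ?_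
  simp only [factorizationSolution, ← mulVec_mulVec, add_mulVec, hC, hD, mulVec_zero, add_zero]

lemma hasDerivAt_factorizationSolution_apply (w κ : n → ℝ) (C D : Matrix n k ℝ) (r : ℝ)
    (i : n) (j : k) :
    HasDerivAt (fun s => factorizationSolution w κ C D s i j)
      (factorizationSolution (w * κ) κ C (-D) r i j) r := by
  have hexp (c : ℝ) : HasDerivAt (fun s => Real.exp (c * s)) (Real.exp (c * r) * c) r := by
    simpa using ((hasDerivAt_id r).const_mul c).exp
  simp only [factorizationSolution_apply]
  refine ((((hexp (κ i)).mul_const (C i j)).add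
    ((hexp (-κ i)).mul_const (D i j))).const_mul (w i)).congr_deriv ?_
  simp only [Pi.mul_apply, Matrix.neg_apply]
  ring

lemma tendsto_factorizationSolution_mul [Fintype k] (w : n → ℝ) {κ : n → ℝ} {C D : Matrix n k ℝ}
    {V : ℝ → Matrix k k ℝ} {l : Filter ℝ} {P S : Matrix n k ℝ}
    (hC : Tendsto (fun r => diagonal (fun i => Real.exp (κ i * r)) * C * V r) l (𝓝 P))
    (hD : Tendsto (fun r => diagonal (fun i => Real.exp (-κ i * r)) * D * V r) l (𝓝 S)) :
    Tendsto (fun r => factorizationSolution w κ C D r * V r) l (𝓝 (diagonal w * (P + S))) := by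
  have hsum := ((continuous_const (y := diagonal w)).matrix_mul continuous_id).tendsto (P + S)
  simpa only [factorizationSolution, Matrix.mul_assoc, Matrix.add_mul, Function.comp_def, id]
    using hsum.comp (hC.add hD)

lemma diagonal_mul_sub_eq_diagonal_mul_diagonal {m p 𝕜 : Type*} [Fintype m] [Fintype p]
    [DecidableEq m] [DecidableEq p] [CommRing 𝕜] (w : m ⊕ p → 𝕜) (κ' : m → 𝕜) (κ'' : p → 𝕜) :
    diagonal (w * Sum.elim κ' κ'') * (fromBlocks 1 0 0 0 - fromBlocks 0 0 0 1) =
      diagonal (Sum.elim κ' fun j => -κ'' j) * diagonal w := by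
  have hsign : (fromBlocks 1 0 0 0 - fromBlocks 0 0 0 1 : Matrix (m ⊕ p) (m ⊕ p) 𝕜) =
      diagonal (Sum.elim 1 (-1)) := by
    rw [← fromBlocks_diagonal, sub_eq_add_neg, fromBlocks_neg, fromBlocks_add]
    simp [Pi.one_def, Pi.neg_def, ← diagonal_neg]
  rw [hsign, diagonal_mul_diagonal, diagonal_mul_diagonal]
  congr 1
  ext (i | j) <;> simp [mul_comm]

theorem superpotential_asymptotics_general_general {m p : Type*} [Fintype m] [Fintype p]
    [DecidableEq m] [DecidableEq p] {κ' : m → ℝ} {κ'' : p → ℝ} {w : m ⊕ p → ℝ}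
    {C D : Matrix (m ⊕ p) (m ⊕ p) ℝ}
    (hw : ∀ i, w i ≠ 0) (hκ' : ∀ i, 0 < κ' i) (hκ : ∀ i j, 0 < κ' i + κ'' j)
    (hM : IsUnit C.toBlocks₁₁)
    (hrank : C.toBlocks₂₂ = C.toBlocks₂₁ * (C.toBlocks₁₁)⁻¹ * C.toBlocks₁₂)
    (hQ : ∀ i j, (C.toBlocks₂₁ * (C.toBlocks₁₁)⁻¹) j i = 0 ∨ κ'' j < κ' i)
    (hsym : Dᵀ * C = Cᵀ * D) (hker : ∀ v, C *ᵥ v = 0 → D *ᵥ v = 0 → v = 0) :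
    (∀ᶠ r in atTop, IsUnit (factorizationSolution w (Sum.elim κ' κ'') C D r)) ∧
      Tendsto (superpotential (factorizationSolution w (Sum.elim κ' κ'') C D)) atTop
        (𝓝 (diagonal (Sum.elim κ' fun j => -κ'' j))) := by
  obtain ⟨W, A, E, hCW, hDW⟩ := exists_mul_eq_normal_form hM hrank hsym hker
  let V : ℝ → Matrix (m ⊕ p) (m ⊕ p) ℝ := fun r =>
    W * diagonal (fun i => Real.exp (Sum.elim (-κ') κ'' i * r))
  have hC : Tendsto (fun r => diagonal (fun i => Real.exp (Sum.elim κ' κ'' i * r)) * C * V r)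
      atTop (𝓝 (fromBlocks 1 0 0 0)) := by
    simpa only [V, ← hCW, Matrix.mul_assoc] using tendsto_growing_part hQ
  have hD : Tendsto (fun r => diagonal (fun i => Real.exp (-Sum.elim κ' κ'' i * r)) * D * V r)
      atTop (𝓝 (fromBlocks 0 0 0 1)) := by
    simpa only [V, ← hDW, Matrix.mul_assoc] using tendsto_decaying_part hκ' hκ hQ A E
  have hσ : Tendsto (fun r => factorizationSolution w (Sum.elim κ' κ'') C D r * V r) atTop
      (𝓝 (diagonal w)) := by
    simpa [fromBlocks_add] using tendsto_factorizationSolution_mul w hC hD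
  have hσ' : Tendsto (fun r =>
      factorizationSolution (w * Sum.elim κ' κ'') (Sum.elim κ' κ'') C (-D) r * V r) atTop
      (𝓝 (diagonal (Sum.elim κ' fun j => -κ'' j) * diagonal w)) := by
    rw [← diagonal_mul_sub_eq_diagonal_mul_diagonal, sub_eq_add_neg]
    refine tendsto_factorizationSolution_mul (w * Sum.elim κ' κ'') hC ?_
    simpa only [Matrix.mul_neg, Matrix.neg_mul] using hD.neg
  have hunit : IsUnit (diagonal w) :=
    isUnit_diagonal.2 (Pi.isUnit_iff.2 fun i => (hw i).isUnit)
  refine ⟨eventually_isUnit_of_tendsto_mul hσ hunit, ?_⟩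
  refine (tendsto_mul_inv_of_tendsto_mul hσ' hσ hunit).congr fun r => congrArg (· * _) ?_
  ext i j
  exact (hasDerivAt_factorizationSolution_apply w _ C D r i j).deriv.symm

end Superpotential

/-- Paper's main Theorem 2 (general form, zero initial potential): if `C` has rank `R`
with invertible upper-left block `M = C₁₁` and `C₂₂ = C₂₁M⁻¹C₁₂`, if `Q₀ = C₂₁M⁻¹`
satisfies `(Q₀)_{ji} = 0` unless `κ''_j < κ'_i`, if `DᵀC = CᵀD`, and if
`σ(r) = κ^{-1/2}(e^{κr}C + e^{-κr}D)` is invertible for at least one `r ≥ 0`, then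
`σ(r)` is eventually invertible and the superpotential `U(r) = σ'(r)σ(r)⁻¹` tends,
as `r → ∞`, to `diag(κ'_1,…,κ'_R,-κ''_{R+1},…,-κ''_N)`. -/
theorem superpotential_asymptotics_general
    (N R : ℕ) (hN : 0 < N) (hR : R ≤ N)
    (κ' : Fin R → ℝ) (κ'' : Fin (N - R) → ℝ)
    (hκ' : ∀ i, 0 < κ' i) (hκ'' : ∀ j, 0 < κ'' j)
    (C D : Matrix (Fin R ⊕ Fin (N - R)) (Fin R ⊕ Fin (N - R)) ℝ)
    (hM : IsUnit C.toBlocks₁₁)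
    (hrank : C.toBlocks₂₂ = C.toBlocks₂₁ * (C.toBlocks₁₁)⁻¹ * C.toBlocks₁₂)
    (hQ₀ : ∀ (i : Fin R) (j : Fin (N - R)),
      (C.toBlocks₂₁ * (C.toBlocks₁₁)⁻¹) j i = 0 ∨ κ'' j < κ' i)
    (hsym : Dᵀ * C = Cᵀ * D) :
    let κv : Fin R ⊕ Fin (N - R) → ℝ := Sum.elim κ' κ''
    let σ : ℝ → Matrix (Fin R ⊕ Fin (N - R)) (Fin R ⊕ Fin (N - R)) ℝ := fun r =>
      diagonal (fun i => (Real.sqrt (κv i))⁻¹) *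
        (diagonal (fun i => Real.exp (κv i * r)) * C +
          diagonal (fun i => Real.exp (-(κv i) * r)) * D)
    let σd : ℝ → Matrix (Fin R ⊕ Fin (N - R)) (Fin R ⊕ Fin (N - R)) ℝ := fun r =>
      Matrix.of fun i j => deriv (fun s => σ s i j) r
    (∃ r : ℝ, 0 ≤ r ∧ IsUnit (σ r)) →
    ∃ r₀ : ℝ, 0 ≤ r₀ ∧ (∀ r, r₀ ≤ r → IsUnit (σ r)) ∧
      Tendsto (fun r => σd r * (σ r)⁻¹) atTop
        (nhds (diagonal (Sum.elim κ' fun j => -κ'' j))) := by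
  rintro κv σ σd ⟨r, -, hr⟩
  have hw : ∀ i, (Real.sqrt (κv i))⁻¹ ≠ 0 := by
    rintro (i | j) <;> simp [κv, Real.sqrt_ne_zero', *]
  obtain ⟨hunit, hlim⟩ := superpotential_asymptotics_general_general hw hκ'
    (fun i j => add_pos (hκ' i) (hκ'' j)) hM hrank hQ₀ hsym
    (fun _ => eq_zero_of_isUnit_factorizationSolution (κ := κv) hr)
  obtain ⟨r₀, hr₀, hσ⟩ := (atTop_basis' 0).eventually_iff.1 hunit
  exact ⟨r₀, hr₀, fun r hr => hσ hr, hlim⟩
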